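/- Let 4/3 < p ≤ 2 and let p′ be the conjugate exponent (1/p + 1/p′ = 1). There is a constant C depending only on p such that for every Schwartz function φ on ℝ, (∫_ℝ ∫_ℝ |[U(t)φ](x)|^{3p} dx dt)^{1/(3p)} ≤ C ‖Fφ‖_{L^{p′}(ℝ)}, where [U(t)φ](x) = ∫_ℝ e^{−4π² i t ξ²} (Fφ)(ξ) e^{2πi x ξ} dξ is the one-dimensional free Schrödinger propagator. -/

import Mathlib

/-!
`U(t)φ` is the Fourier extension `Ef` of `f = 𝓕φ` from the parabola `γ`. Its square is the Fourier
extension of `f ⊗ f` along the sum map `(ξ, η) ↦ γ ξ + γ η`, which is two-to-one with Jacobian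
proportional to `|ξ - η|`. It therefore pushes `|ξ - η| dξ dη` forward to a measure bounded by a
multiple of Lebesgue measure, and the density of `f ⊗ f` with respect to this measure is
`f ξ * f η / |ξ - η|`. Plancherel and the trivial `L¹ → L^∞` bound interpolate to a Hausdorff–Young
inequality, which with `r' = 3p / 2` bounds `‖Ef‖_{3p} ^ 2` by the `1 / r`-th power of
`∬ |f ξ| ^ r * |f η| ^ r * |ξ - η| ^ (1 - r)`. The diagonal Hardy–Littlewood–Sobolev inequality
controls this integral by `‖f‖_{p'} ^ (2r)`; the singularity is integrable, i.e. `r < 2`, exactly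
when `p > 4 / 3`.
-/

open MeasureTheory Real FourierTransform
open scoped ENNReal

/-- The one-dimensional free Schrödinger propagator
`[U(t)φ](x) = ∫ e^{-4π²itξ²} (𝓕φ)(ξ) e^{2πixξ} dξ`. -/
noncomputable def schrod1 (t : ℝ) (φ : ℝ → ℂ) : ℝ → ℂ :=
  fun x => ∫ ξ : ℝ,
    Complex.exp (-(4 * (π : ℂ) ^ 2 * (t : ℂ) * (ξ : ℂ) ^ 2) * Complex.I) *
      𝓕 φ ξ * Complex.exp (2 * (π : ℂ) * Complex.I * (x : ℂ) * (ξ : ℂ))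

open scoped NNReal SchwartzMap InnerProductSpace Topology
open Filter Set Module

section Plancherel

variable {V F : Type*} [NormedAddCommGroup V] [InnerProductSpace ℝ V] [FiniteDimensional ℝ V]
  [MeasurableSpace V] [BorelSpace V]

theorem continuous_fourier_of_integrable [NormedAddCommGroup F] [NormedSpace ℂ F] {f : V → F}
    (hf : Integrable f) : Continuous (𝓕 f) :=
  VectorFourier.fourierIntegral_continuous continuous_fourierChar continuous_inner hf

theorem integral_fourier_smul_eq_of_integrable [NormedAddCommGroup F] [NormedSpace ℂ F]
    [CompleteSpace F] {f : V → ℂ} {g : V → F} (hf : Integrable f) (hg : Integrable g) :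
    ∫ ξ, 𝓕 f ξ • g ξ = ∫ x, f x • 𝓕 g x := by
  simpa using! VectorFourier.integral_fourierIntegral_smul_eq_flip (L := innerₗ V)
    continuous_fourierChar continuous_inner hf hg

variable [NormedAddCommGroup F] [InnerProductSpace ℂ F] [CompleteSpace F]

theorem fourier_ae_eq_Lp_fourier {f : V → F} (hf : Integrable f) (hf2 : MemLp f 2) :
    𝓕 f =ᵐ[volume] (𝓕 (hf2.toLp f) : Lp F 2 (volume : Measure V)) := by
  refine ae_eq_of_integral_contDiff_smul_eq
    (continuous_fourier_of_integrable hf).locallyIntegrable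
    ((Lp.memLp _).locallyIntegrable one_le_two) fun g hg hgc => ?_
  let ψ : 𝓢(V, ℂ) := HasCompactSupport.toSchwartzMap (f := Complex.ofRealCLM ∘ g)
    (hgc.comp_left rfl) (by fun_prop)
  calc ∫ x, g x • 𝓕 f x = ∫ x, ψ x • 𝓕 f x := by simp [ψ]
    _ = ∫ x, 𝓕 ψ x • f x := by
        rw [SchwartzMap.fourier_coe, integral_fourier_smul_eq_of_integrable ψ.integrable hf]
    _ = ∫ x, 𝓕 ψ x • (hf2.toLp f) x :=
        integral_congr_ae (hf2.coeFn_toLp.mono fun x hx => by simp only [hx])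
    _ = Lp.toTemperedDistribution (𝓕 (hf2.toLp f) : Lp F 2 (volume : Measure V)) ψ := by
        rw [← Lp.fourier_toTemperedDistribution_eq, TemperedDistribution.fourier_apply,
          Lp.toTemperedDistribution_apply]
    _ = ∫ x, g x • (𝓕 (hf2.toLp f) : Lp F 2 (volume : Measure V)) x := by
        simp [ψ, Lp.toTemperedDistribution_apply]

theorem eLpNorm_fourier_two {f : V → F} (hf : Integrable f) (hf2 : MemLp f 2) :
    eLpNorm (𝓕 f) 2 = eLpNorm f 2 := by
  rw [eLpNorm_congr_ae (fourier_ae_eq_Lp_fourier hf hf2), ← Lp.enorm_def, ← ofReal_norm,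
    Lp.norm_fourier_eq, ofReal_norm, Lp.enorm_toLp]

end Plancherel

section LpNorm

variable {X E : Type*} [MeasurableSpace X] {μ : Measure X} [NormedAddCommGroup E]

theorem eLpNorm_ofReal_rpow_eq_lintegral {p : ℝ} (hp : 0 < p) (f : X → E) :
    eLpNorm f (.ofReal p) μ ^ p = ∫⁻ x, ‖f x‖ₑ ^ p ∂μ := by
  simpa [ENNReal.ofReal, hp.le] using eLpNorm_nnreal_pow_eq_lintegral (f := f) (μ := μ)
    (Real.toNNReal_pos.2 hp).ne'

theorem eLpNorm_two_sq_eq_lintegral (f : X → E) :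
    eLpNorm f 2 μ ^ 2 = ∫⁻ x, ‖f x‖ₑ ^ 2 ∂μ := by
  simpa using eLpNorm_ofReal_rpow_eq_lintegral two_pos f

theorem eLpNorm_ofReal_rpow_eq_lintegral_meas_lt_mul {p : ℝ} (hp : 0 < p) {f : X → E}
    (hf : AEStronglyMeasurable f μ) :
    eLpNorm f (.ofReal p) μ ^ p =
      ENNReal.ofReal p * ∫⁻ t in Ioi 0, μ {x | t < ‖f x‖} * ENNReal.ofReal (t ^ (p - 1)) := by
  rw [eLpNorm_ofReal_rpow_eq_lintegral hp, ← lintegral_rpow_eq_lintegral_meas_lt_mul μ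
    (.of_forall fun x => norm_nonneg _) hf.norm.aemeasurable hp]
  simp only [← ofReal_norm, ENNReal.ofReal_rpow_of_nonneg (norm_nonneg _) hp.le]

end LpNorm

section Interpolation

variable {r q : ℝ}

theorem lintegral_Ioi_indicator_rpow (hrq : r.HolderConjugate q) (hr : r < 2) {m h : ℝ}
    (hm : 0 ≤ m) (hh : 0 ≤ h) :
    ∫⁻ t in Ioi 0, {t | h ^ (r - 1) * t ≤ m}.indicator
        (fun t => ENNReal.ofReal (h ^ 2 * t ^ (q - 3))) t =
      ENNReal.ofReal (m ^ (q - 2) / (q - 2) * h ^ r) := by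
  have hmul : (r - 1) * (q - 1) = 1 := by linarith [hrq.mul_eq_add]
  have hq : 2 < q := by nlinarith [hrq.lt, hrq.symm.lt]
  rcases hh.eq_or_lt with rfl | hh
  · simp [Real.zero_rpow hrq.ne_zero, Set.indicator_apply]
  have hpow : 0 < h ^ (r - 1) := by positivity
  have hset : {t | h ^ (r - 1) * t ≤ m} = Iic (m / h ^ (r - 1)) := by
    ext t
    rw [Set.mem_ofPred_eq, Set.mem_Iic, le_div_iff₀' hpow]
  have hT : 0 ≤ m / h ^ (r - 1) := by positivity
  rw [hset, setLIntegral_indicator measurableSet_Iic, Set.inter_comm, Set.Ioi_inter_Iic,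
    ← ofReal_integral_eq_lintegral_ofReal, ← intervalIntegral.integral_of_le hT,
    intervalIntegral.integral_const_mul, integral_rpow (.inl (by linarith))]
  · congr 1
    have hsplit : h ^ 2 = h ^ r * (h ^ (r - 1)) ^ (q - 2) := by
      rw [← rpow_mul hh.le, ← rpow_add hh, ← rpow_natCast]
      congr 1
      push_cast
      linarith
    rw [hsplit, show q - 3 + 1 = q - 2 by ring, Real.zero_rpow (by linarith), sub_zero,
      div_rpow hm hpow.le]
    field_simp
  · exact ((intervalIntegrable_iff_integrableOn_Ioc_of_le hT).1
      (intervalIntegral.intervalIntegrable_rpow' (by linarith))).const_mul _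
  · filter_upwards [ae_restrict_mem measurableSet_Ioc] with t ht
    have := ht.1
    positivity

variable {X Y E F : Type*} [MeasurableSpace X] [MeasurableSpace Y] {μ : Measure X} {ν : Measure Y}
  [NormedAddCommGroup E] [NormedAddCommGroup F] {f : X → E}

theorem mul_eLpNorm_one_indicator_le (hr : 0 < r) {m t : ℝ} (hm : 0 ≤ m) (ht : 0 ≤ t) :
    ENNReal.ofReal m * eLpNorm ({x | m < ‖f x‖ ^ (r - 1) * t}.indicator f) 1 μ ≤
      ENNReal.ofReal t * eLpNorm f (.ofReal r) μ ^ r := by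
  rw [eLpNorm_one_eq_lintegral_enorm, eLpNorm_ofReal_rpow_eq_lintegral hr,
    ← lintegral_const_mul' _ _ ENNReal.ofReal_ne_top,
    ← lintegral_const_mul' _ _ ENNReal.ofReal_ne_top]
  refine lintegral_mono fun x => ?_
  by_cases hx : x ∈ {x | m < ‖f x‖ ^ (r - 1) * t}
  · have hsplit : ‖f x‖ ^ r = ‖f x‖ ^ (r - 1) * ‖f x‖ := by
      rw [← rpow_add_one' (norm_nonneg _) (by linarith), sub_add_cancel]
    have hreal : m * ‖f x‖ ≤ t * ‖f x‖ ^ r := by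
      rw [hsplit, ← mul_assoc, mul_comm t]
      exact mul_le_mul_of_nonneg_right (le_of_lt hx) (norm_nonneg _)
    rw [Set.indicator_of_mem hx, ← ofReal_norm,
      ENNReal.ofReal_rpow_of_nonneg (norm_nonneg _) hr.le, ← ENNReal.ofReal_mul hm,
      ← ENNReal.ofReal_mul ht]
    exact ENNReal.ofReal_le_ofReal hreal
  · simp [hx]

theorem mul_eLpNorm_one_indicator_le_half (hr : 0 < r) (hf : Integrable f μ) {N : ℝ≥0}
    (hN : eLpNorm f (.ofReal r) μ = N) (A : ℝ≥0) {t : ℝ} (ht : 0 ≤ t) :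
    A * eLpNorm ({x | 2 * A * N ^ r < ‖f x‖ ^ (r - 1) * t}.indicator f) 1 μ ≤
      ENNReal.ofReal (t / 2) := by
  rcases eq_or_ne N 0 with hN0 | hN0
  · have hzero : f =ᵐ[μ] 0 :=
      (eLpNorm_eq_zero_iff hf.aestronglyMeasurable (ENNReal.ofReal_pos.2 hr).ne').1
        (by simp [hN, hN0])
    have hind := eLpNorm_indicator_le (μ := μ) (p := 1)
      (s := {x | 2 * A * N ^ r < ‖f x‖ ^ (r - 1) * t}) f
    rw [eLpNorm_congr_ae hzero, eLpNorm_zero, nonpos_iff_eq_zero] at hind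
    rw [hind]
    simp
  have : (0 : ℝ) < N ^ r := rpow_pos_of_pos (by positivity) r
  have hmul := mul_eLpNorm_one_indicator_le (μ := μ) (f := f) hr
    (m := 2 * A * N ^ r) (by positivity) ht
  generalize eLpNorm ({x | 2 * A * N ^ r < ‖f x‖ ^ (r - 1) * t}.indicator f) 1 μ = I at hmul ⊢
  rw [hN, ← ENNReal.ofReal_coe_nnreal (p := N), ENNReal.ofReal_rpow_of_pos (by positivity),
    ← ENNReal.ofReal_mul ht, show 2 * A * N ^ r = 2 * (N : ℝ) ^ r * A by ring,
    show t * N ^ r = 2 * (N : ℝ) ^ r * (t / 2) by ring, ENNReal.ofReal_mul (by positivity),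
    ENNReal.ofReal_mul (p := 2 * (N : ℝ) ^ r) (by positivity), ENNReal.ofReal_coe_nnreal,
    mul_assoc] at hmul
  exact (ENNReal.mul_le_mul_iff_right (ENNReal.ofReal_pos.2 (by positivity)).ne'
    ENNReal.ofReal_ne_top).1 hmul

theorem measure_lt_norm_le {T : (X → E) → Y → F} {A B : ℝ≥0}
    (hT_meas : ∀ f, Integrable f μ → AEStronglyMeasurable (T f) ν)
    (hT_add : ∀ f g, Integrable f μ → Integrable g μ → ∀ᵐ y ∂ν,
      ‖T (f + g) y‖ ≤ ‖T f y‖ + ‖T g y‖)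
    (hT_one : ∀ f, Integrable f μ → eLpNorm (T f) ⊤ ν ≤ A * eLpNorm f 1 μ)
    (hT_two : ∀ f, Integrable f μ → eLpNorm (T f) 2 ν ≤ B * eLpNorm f 2 μ)
    (hf : Integrable f μ) {s : Set X} (hs : NullMeasurableSet s μ) {t : ℝ} (ht : 0 < t)
    (hts : A * eLpNorm (s.indicator f) 1 μ ≤ ENNReal.ofReal (t / 2)) :
    ν {y | t < ‖T f y‖} ≤ ENNReal.ofReal (4 * B ^ 2 * t ^ (-2 : ℝ)) *
      eLpNorm (sᶜ.indicator f) 2 μ ^ 2 := by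
  have hhigh : ∀ᵐ y ∂ν, ‖T (s.indicator f) y‖ ≤ t / 2 := by
    have hbound := (hT_one _ (hf.indicator₀ hs)).trans hts
    filter_upwards [enorm_ae_le_eLpNormEssSup (T (s.indicator f)) ν] with y hy
    rw [← eLpNorm_exponent_top] at hy
    rw [← toReal_enorm]
    exact ENNReal.toReal_le_of_le_ofReal (by positivity) (hy.trans hbound)
  calc ν {y | t < ‖T f y‖}
      ≤ ν {y | ENNReal.ofReal (t / 2) ≤ ‖T (sᶜ.indicator f) y‖ₑ} := by
        refine measure_mono_ae ?_
        filter_upwards [hhigh, hT_add _ _ (hf.indicator₀ hs) (hf.indicator₀ hs.compl)]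
          with y hy hadd (hty : t < ‖T f y‖)
        rw [Set.indicator_self_add_compl] at hadd
        change ENNReal.ofReal (t / 2) ≤ ‖T (sᶜ.indicator f) y‖ₑ
        rw [← ofReal_norm]
        exact ENNReal.ofReal_le_ofReal (by linarith [hty])
    _ ≤ (ENNReal.ofReal (t / 2))⁻¹ ^ 2 * eLpNorm (T (sᶜ.indicator f)) 2 ν ^ 2 := by
        simpa using meas_ge_le_mul_pow_eLpNorm_enorm ν two_ne_zero ENNReal.ofNat_ne_top
          (hT_meas _ (hf.indicator₀ hs.compl)) (ENNReal.ofReal_pos.2 (half_pos ht)).ne' (by simp)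
    _ ≤ (ENNReal.ofReal (t / 2))⁻¹ ^ 2 * (B * eLpNorm (sᶜ.indicator f) 2 μ) ^ 2 := by
        gcongr
        exact hT_two _ (hf.indicator₀ hs.compl)
    _ = ENNReal.ofReal (4 * B ^ 2 * t ^ (-2 : ℝ)) * eLpNorm (sᶜ.indicator f) 2 μ ^ 2 := by
        rw [mul_pow, ← mul_assoc, ← ENNReal.ofReal_inv_of_pos (half_pos ht),
          ← ENNReal.ofReal_coe_nnreal, ← ENNReal.ofReal_pow (by positivity),
          ← ENNReal.ofReal_pow (by positivity), ← ENNReal.ofReal_mul (by positivity),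
          rpow_neg ht.le, rpow_two]
        congr 2
        field_simp
        ring

theorem lintegral_eLpNorm_two_indicator_sq_mul_rpow [SFinite μ] (hrq : r.HolderConjugate q)
    (hr : r < 2) (hf : AEStronglyMeasurable f μ) {m : ℝ} (hm : 0 ≤ m) :
    ∫⁻ t in Ioi 0, eLpNorm ({x | m < ‖f x‖ ^ (r - 1) * t}ᶜ.indicator f) 2 μ ^ 2 *
        ENNReal.ofReal (t ^ (q - 3)) =
      ENNReal.ofReal (m ^ (q - 2) / (q - 2)) * eLpNorm f (.ofReal r) μ ^ r := by
  have hq : 2 < q := by nlinarith [hrq.lt, hrq.symm.lt, hrq.mul_eq_add]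
  obtain ⟨k, hk_def⟩ : ∃ k : ℝ → ℝ → ℝ≥0∞, k = fun t h => {t | h ^ (r - 1) * t ≤ m}.indicator
      (fun t => ENNReal.ofReal (h ^ 2 * t ^ (q - 3))) t := ⟨_, rfl⟩
  have hk : Measurable (Function.uncurry k) := by
    rw [hk_def]
    refine Measurable.ite (p := fun z : ℝ × ℝ => z.2 ^ (r - 1) * z.1 ≤ m)
      (measurableSet_le (by fun_prop) measurable_const) (by fun_prop) measurable_const
  have hslice (t : ℝ) : eLpNorm ({x | m < ‖f x‖ ^ (r - 1) * t}ᶜ.indicator f) 2 μ ^ 2 *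
      ENNReal.ofReal (t ^ (q - 3)) = ∫⁻ x, k t ‖f x‖ ∂μ := by
    rw [eLpNorm_two_sq_eq_lintegral, ← lintegral_mul_const' _ _ ENNReal.ofReal_ne_top]
    refine lintegral_congr fun x => ?_
    by_cases hx : ‖f x‖ ^ (r - 1) * t ≤ m
    · simp [hk_def, hx, ENNReal.ofReal_mul, ENNReal.ofReal_pow]
    · simp [hk_def, hx]
  simp only [hslice]
  calc ∫⁻ t in Ioi 0, ∫⁻ x, k t ‖f x‖ ∂μ
      = ∫⁻ x, (∫⁻ t in Ioi 0, k t ‖f x‖) ∂μ :=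
        lintegral_lintegral_swap (hk.comp_aemeasurable
          (measurable_fst.aemeasurable.prodMk hf.norm.aemeasurable.comp_snd))
    _ = ∫⁻ x, ENNReal.ofReal (m ^ (q - 2) / (q - 2)) * ‖f x‖ₑ ^ r ∂μ := by
        refine lintegral_congr fun x => ?_
        have : 0 ≤ m ^ (q - 2) / (q - 2) := div_nonneg (by positivity) (by linarith)
        rw [hk_def, lintegral_Ioi_indicator_rpow hrq hr hm (norm_nonneg _),
          ENNReal.ofReal_mul this, ← ofReal_norm,
          ENNReal.ofReal_rpow_of_nonneg (norm_nonneg _) hrq.nonneg]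
    _ = ENNReal.ofReal (m ^ (q - 2) / (q - 2)) * eLpNorm f (.ofReal r) μ ^ r := by
        rw [lintegral_const_mul' _ _ ENNReal.ofReal_ne_top,
          eLpNorm_ofReal_rpow_eq_lintegral hrq.pos]

/-- At level `t`, the part of `f` above height `(m / t) ^ (1 / (r - 1))` has image at most `t / 2`
in `L^∞`, so only the part below that height, estimated in `L²`, contributes. -/
theorem eLpNorm_rpow_le_of_truncation [SFinite μ] (hrq : r.HolderConjugate q) (hr : r < 2)
    {T : (X → E) → Y → F} {A B : ℝ≥0}
    (hT_meas : ∀ f, Integrable f μ → AEStronglyMeasurable (T f) ν)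
    (hT_add : ∀ f g, Integrable f μ → Integrable g μ → ∀ᵐ y ∂ν,
      ‖T (f + g) y‖ ≤ ‖T f y‖ + ‖T g y‖)
    (hT_one : ∀ f, Integrable f μ → eLpNorm (T f) ⊤ ν ≤ A * eLpNorm f 1 μ)
    (hT_two : ∀ f, Integrable f μ → eLpNorm (T f) 2 ν ≤ B * eLpNorm f 2 μ)
    (hf : Integrable f μ) {m : ℝ} (hm : 0 ≤ m)
    (hmA : ∀ t : ℝ, 0 < t → A * eLpNorm ({x | m < ‖f x‖ ^ (r - 1) * t}.indicator f) 1 μ ≤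
      ENNReal.ofReal (t / 2)) :
    eLpNorm (T f) (.ofReal q) ν ^ q ≤
      ENNReal.ofReal (q * (4 * B ^ 2 * (m ^ (q - 2) / (q - 2)))) * eLpNorm f (.ofReal r) μ ^ r := by
  have hlevel {t : ℝ} (ht : 0 < t) : ν {y | t < ‖T f y‖} * ENNReal.ofReal (t ^ (q - 1)) ≤
      ENNReal.ofReal (4 * B ^ 2) * (eLpNorm ({x | m < ‖f x‖ ^ (r - 1) * t}ᶜ.indicator f) 2 μ ^ 2 *
        ENNReal.ofReal (t ^ (q - 3))) := by
    have hs : NullMeasurableSet {x | m < ‖f x‖ ^ (r - 1) * t} μ :=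
      nullMeasurableSet_lt aemeasurable_const
        ((hf.aestronglyMeasurable.norm.aemeasurable.pow_const _).mul_const t)
    refine (mul_le_mul_left (measure_lt_norm_le hT_meas hT_add hT_one hT_two hf hs ht
      (hmA t ht)) _).trans ?_
    rw [ENNReal.ofReal_mul (by positivity), show q - 3 = -2 + (q - 1) by ring, rpow_add ht,
      ENNReal.ofReal_mul (rpow_nonneg ht.le _)]
    exact le_of_eq (by ac_rfl)
  calc eLpNorm (T f) (.ofReal q) ν ^ q
      = ENNReal.ofReal q *
          ∫⁻ t in Ioi 0, ν {y | t < ‖T f y‖} * ENNReal.ofReal (t ^ (q - 1)) :=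
        eLpNorm_ofReal_rpow_eq_lintegral_meas_lt_mul hrq.symm.pos (hT_meas f hf)
    _ ≤ ENNReal.ofReal q * ∫⁻ t in Ioi 0, ENNReal.ofReal (4 * B ^ 2) *
          (eLpNorm ({x | m < ‖f x‖ ^ (r - 1) * t}ᶜ.indicator f) 2 μ ^ 2 *
            ENNReal.ofReal (t ^ (q - 3))) := by
        gcongr ENNReal.ofReal q * ?_
        exact setLIntegral_mono' measurableSet_Ioi fun t ht => hlevel ht
    _ = _ := by
        rw [lintegral_const_mul' _ _ ENNReal.ofReal_ne_top,
          lintegral_eLpNorm_two_indicator_sq_mul_rpow hrq hr hf.aestronglyMeasurable hm,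
          ENNReal.ofReal_mul hrq.symm.nonneg,
          ENNReal.ofReal_mul (p := 4 * (B : ℝ) ^ 2) (by positivity)]
        simp only [mul_assoc]

theorem exists_eLpNorm_le_of_one_top_of_two_two [SFinite μ] (hrq : r.HolderConjugate q)
    (hr : r < 2) {T : (X → E) → Y → F} {A B : ℝ≥0}
    (hT_meas : ∀ f, Integrable f μ → AEStronglyMeasurable (T f) ν)
    (hT_add : ∀ f g, Integrable f μ → Integrable g μ → ∀ᵐ y ∂ν,
      ‖T (f + g) y‖ ≤ ‖T f y‖ + ‖T g y‖)
    (hT_one : ∀ f, Integrable f μ → eLpNorm (T f) ⊤ ν ≤ A * eLpNorm f 1 μ)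
    (hT_two : ∀ f, Integrable f μ → eLpNorm (T f) 2 ν ≤ B * eLpNorm f 2 μ) :
    ∃ C : ℝ≥0, ∀ f, Integrable f μ → MemLp f (.ofReal r) μ →
      eLpNorm (T f) (.ofReal q) ν ≤ C * eLpNorm f (.ofReal r) μ := by
  have hq : 2 < q := by nlinarith [hrq.lt, hrq.symm.lt, hrq.mul_eq_add]
  refine ⟨(q * (4 * B ^ 2 * ((2 * A) ^ (q - 2) / (q - 2)))).toNNReal ^ q⁻¹, fun f hf hfr => ?_⟩
  obtain ⟨N, hN⟩ : ∃ N : ℝ≥0, eLpNorm f (.ofReal r) μ = N :=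
    ⟨_, (ENNReal.coe_toNNReal hfr.eLpNorm_ne_top).symm⟩
  have hmain := eLpNorm_rpow_le_of_truncation hrq hr hT_meas hT_add hT_one hT_two hf
    (by positivity) fun t ht => mul_eLpNorm_one_indicator_le_half hrq.pos hf hN A ht.le
  have hC : 0 ≤ q * (4 * B ^ 2 * ((2 * A) ^ (q - 2) / (q - 2))) := by
    have := sub_pos.2 hq
    positivity
  have hexp : ((N : ℝ) ^ r) ^ (q - 2) * N ^ r = N ^ q := by
    rcases N.coe_nonneg.eq_or_lt with hN0 | hN0
    · simp [← hN0, Real.zero_rpow hrq.ne_zero, Real.zero_rpow hrq.symm.ne_zero]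
    · rw [← rpow_mul hN0.le, ← rpow_add hN0]
      congr 1
      linarith [hrq.mul_eq_add]
  rw [← ENNReal.rpow_le_rpow_iff hrq.symm.pos, ENNReal.mul_rpow_of_nonneg _ _ hrq.symm.nonneg]
  refine hmain.trans_eq ?_
  rw [hN, ENNReal.coe_rpow_of_nonneg _ (inv_nonneg.2 hrq.symm.nonneg),
    ENNReal.rpow_inv_rpow hrq.symm.ne_zero, ← ENNReal.ofReal, ← ENNReal.ofReal_coe_nnreal (p := N),
    ENNReal.ofReal_rpow_of_nonneg N.coe_nonneg hrq.nonneg,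
    ENNReal.ofReal_rpow_of_nonneg N.coe_nonneg hrq.symm.nonneg, ← hexp,
    ← ENNReal.ofReal_mul' (by positivity), ← ENNReal.ofReal_mul hC,
    mul_rpow (by positivity) (by positivity)]
  congr 1
  ring

end Interpolation

section FourierExtension

variable {Y V : Type*} [MeasurableSpace Y] [NormedAddCommGroup V] [InnerProductSpace ℝ V]

/-- The Fourier extension operator `H ↦ (Φ_*(H μ))^` of a measure `μ` carried by the (not
necessarily injective) parametrized surface `Φ : Y → V`. -/
noncomputable def fourierExtension (μ : Measure Y) (Φ : Y → V) (H : Y → ℂ) (w : V) : ℂ :=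
  ∫ y, 𝐞 (-⟪w, Φ y⟫_ℝ) • H y ∂μ

variable {μ : Measure Y} {Φ : Y → V} {H : Y → ℂ}

theorem enorm_fourierExtension_le (w : V) :
    ‖fourierExtension μ Φ H w‖ₑ ≤ eLpNorm H 1 μ := by
  rw [eLpNorm_one_eq_lintegral_enorm]
  refine (enorm_integral_le_lintegral_enorm _).trans_eq (lintegral_congr fun y => ?_)
  rw [← ofReal_norm, Circle.norm_smul, ofReal_norm]

theorem fourierExtension_mul_fourierExtension {Z : Type*} [MeasurableSpace Z] {ν : Measure Z}
    [SFinite μ] [SFinite ν] {Ψ : Z → V} (H : Y → ℂ) (G : Z → ℂ) (w : V) :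
    fourierExtension μ Φ H w * fourierExtension ν Ψ G w =
      fourierExtension (μ.prod ν) (fun z => Φ z.1 + Ψ z.2) (fun z => H z.1 * G z.2) w := by
  simp only [fourierExtension, ← integral_prod_mul, smul_mul_smul_comm, inner_add_right, neg_add,
    AddChar.map_add_eq_mul]

theorem fourierExtension_withDensity {h : Y → ℝ≥0} (hh : Measurable h) (H : Y → ℂ) (w : V) :
    fourierExtension (μ.withDensity fun y => h y) Φ H w =
      fourierExtension μ Φ (fun y => h y • H y) w := by
  simp only [fourierExtension, integral_withDensity_eq_integral_smul hh, smul_comm (h _)]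

theorem fourierExtension_congr_ae {G : Y → ℂ} (h : H =ᵐ[μ] G) :
    fourierExtension μ Φ H = fourierExtension μ Φ G := by
  ext w
  exact integral_congr_ae (h.mono fun y hy => by simp only [hy])

variable [MeasurableSpace V] [BorelSpace V] [FiniteDimensional ℝ V]

theorem integrable_fourierChar_smul (hΦ : Measurable Φ) (hH : Integrable H μ) (w : V) :
    Integrable (fun y => 𝐞 (-⟪w, Φ y⟫_ℝ) • H y) μ := by
  have hchar : AEStronglyMeasurable (fun y => 𝐞 (-⟪w, Φ y⟫_ℝ)) μ :=
    (by fun_prop : Continuous fun v : V => 𝐞 (-⟪w, v⟫_ℝ)).comp_aestronglyMeasurable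
      hΦ.aestronglyMeasurable
  refine hH.mono (hchar.smul hH.aestronglyMeasurable) ?_
  simp [Circle.norm_smul]

theorem fourierExtension_add (hΦ : Measurable Φ) {H' : Y → ℂ} (hH : Integrable H μ)
    (hH' : Integrable H' μ) :
    fourierExtension μ Φ (H + H') = fourierExtension μ Φ H + fourierExtension μ Φ H' := by
  ext w
  simpa only [fourierExtension, Pi.add_apply, smul_add] using
    integral_add (integrable_fourierChar_smul hΦ hH w) (integrable_fourierChar_smul hΦ hH' w)

theorem continuous_fourierExtension (hΦ : Measurable Φ) (hH : Integrable H μ) :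
    Continuous (fourierExtension μ Φ H) :=
  continuous_of_dominated
    (fun w => (integrable_fourierChar_smul hΦ hH w).aestronglyMeasurable)
    (fun _ => .of_forall fun _ => (Circle.norm_smul _ _).le) hH.norm
    (.of_forall fun _ => by fun_prop)

theorem integral_fourierExtension_mul [SFinite μ] (hΦ : Measurable Φ) (hH : Integrable H μ)
    {g : V → ℂ} (hg : Integrable g) :
    ∫ w, fourierExtension μ Φ H w * g w = ∫ y, H y * 𝓕 g (Φ y) ∂μ := by
  have hint : Integrable (fun z : V × Y => 𝐞 (-⟪z.1, Φ z.2⟫_ℝ) • (g z.1 * H z.2))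
      (volume.prod μ) := by
    have hchar : AEStronglyMeasurable (fun z : V × Y => 𝐞 (-⟪z.1, Φ z.2⟫_ℝ)) (volume.prod μ) :=
      (by fun_prop : Continuous fun u : V × V => 𝐞 (-⟪u.1, u.2⟫_ℝ)).comp_aestronglyMeasurable
        (measurable_fst.prodMk (hΦ.comp measurable_snd)).aestronglyMeasurable
    have hprod := hg.mul_prod hH
    refine hprod.mono (hchar.smul hprod.aestronglyMeasurable) ?_
    simp [Circle.norm_smul]
  calc ∫ w, fourierExtension μ Φ H w * g w
      = ∫ w, ∫ y, 𝐞 (-⟪w, Φ y⟫_ℝ) • (g w * H y) ∂μ := by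
        simp only [fourierExtension, ← integral_const_mul, mul_smul_comm, mul_comm _ (g _)]
    _ = ∫ y, (∫ w, 𝐞 (-⟪w, Φ y⟫_ℝ) • (g w * H y)) ∂μ := integral_integral_swap hint
    _ = ∫ y, H y * 𝓕 g (Φ y) ∂μ := by
        simp only [Real.fourier_eq, ← integral_mul_const, smul_mul_assoc, mul_comm (H _)]

theorem eLpNorm_fourier_comp_two_le (hΦ : Measurable Φ) {K : ℝ≥0∞} (hK : μ.map Φ ≤ K • volume)
    {g : V → ℂ} (hg : Integrable g) (hg2 : MemLp g 2) :
    eLpNorm (fun y => 𝓕 g (Φ y)) 2 μ ≤ K ^ (1 / 2 : ℝ) * eLpNorm g 2 := by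
  calc eLpNorm (fun y => 𝓕 g (Φ y)) 2 μ = eLpNorm (𝓕 g) 2 (μ.map Φ) :=
        (eLpNorm_map_measure (continuous_fourier_of_integrable hg).aestronglyMeasurable
          hΦ.aemeasurable).symm
    _ ≤ eLpNorm (𝓕 g) 2 (K • volume) := eLpNorm_mono_measure _ hK
    _ = K ^ (1 / 2 : ℝ) * eLpNorm g 2 volume := by
        rw [eLpNorm_smul_measure_of_ne_top ENNReal.ofNat_ne_top, eLpNorm_fourier_two hg hg2]
        simp

theorem enorm_integral_fourierExtension_mul_le [SFinite μ] (hΦ : Measurable Φ) {K : ℝ≥0∞}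
    (hK : μ.map Φ ≤ K • volume) (hH : Integrable H μ) {g : V → ℂ} (hg : Integrable g)
    (hg2 : MemLp g 2) :
    ‖∫ w, fourierExtension μ Φ H w * g w‖ₑ ≤
      K ^ (1 / 2 : ℝ) * eLpNorm H 2 μ * eLpNorm g 2 := by
  calc ‖∫ w, fourierExtension μ Φ H w * g w‖ₑ
      ≤ eLpNorm (H • fun y => 𝓕 g (Φ y)) 1 μ := by
        rw [integral_fourierExtension_mul hΦ hH hg, eLpNorm_one_eq_lintegral_enorm]
        exact enorm_integral_le_lintegral_enorm _
    _ ≤ eLpNorm H 2 μ * eLpNorm (fun y => 𝓕 g (Φ y)) 2 μ :=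
        eLpNorm_smul_le_mul_eLpNorm
          ((continuous_fourier_of_integrable hg).measurable.comp hΦ).aestronglyMeasurable
          hH.aestronglyMeasurable
    _ ≤ eLpNorm H 2 μ * (K ^ (1 / 2 : ℝ) * eLpNorm g 2 volume) := by
        gcongr
        exact eLpNorm_fourier_comp_two_le hΦ hK hg hg2
    _ = K ^ (1 / 2 : ℝ) * eLpNorm H 2 μ * eLpNorm g 2 volume := by ring

/-- Duality with a truncation of the conjugate of `fourierExtension μ Φ H`. -/
theorem eLpNorm_fourierExtension_restrict_two_le [SFinite μ] (hΦ : Measurable Φ) {K : ℝ≥0∞}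
    (hK : μ.map Φ ≤ K • volume) (hH : Integrable H μ) {s : Set V} (hs : MeasurableSet s)
    (hs_fin : volume s ≠ ⊤) :
    eLpNorm (fourierExtension μ Φ H) 2 (volume.restrict s) ≤
      K ^ (1 / 2 : ℝ) * eLpNorm H 2 μ := by
  set G := fourierExtension μ Φ H with hG
  have hGc : Continuous G := continuous_fourierExtension hΦ hH
  have : IsFiniteMeasure (volume.restrict s) := ⟨by simpa using hs_fin.lt_top⟩
  have hG_mem (p : ℝ≥0∞) : MemLp G p (volume.restrict s) := by
    refine .of_bound hGc.aestronglyMeasurable (eLpNorm H 1 μ).toReal (.of_forall fun w => ?_)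
    rw [← toReal_enorm]
    exact ENNReal.toReal_mono (memLp_one_iff_integrable.2 hH).eLpNorm_ne_top
      (enorm_fourierExtension_le w)
  let g : V → ℂ := s.indicator (star G)
  have hg_mem (p : ℝ≥0∞) : MemLp g p :=
    (memLp_indicator_iff_restrict hs).2 (hG_mem p).star
  have hg_norm : eLpNorm g 2 = eLpNorm G 2 (volume.restrict s) := by
    rw [eLpNorm_indicator_eq_eLpNorm_restrict hs]
    exact eLpNorm_congr_norm_ae (.of_forall fun w => by simp)
  have hpair : ∫ w, G w * g w = ((∫ w in s, ‖G w‖ ^ 2 : ℝ) : ℂ) := by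
    rw [← integral_complex_ofReal, ← integral_indicator hs]
    congr 1 with w
    by_cases hw : w ∈ s <;> simp [g, hw, Complex.mul_conj']
  have hsq : ‖∫ w, G w * g w‖ₑ = eLpNorm G 2 (volume.restrict s) ^ 2 := by
    rw [hpair, ← ofReal_norm, Complex.norm_real, norm_of_nonneg (by positivity),
      ofReal_integral_eq_lintegral_ofReal ((hG_mem 2).integrable_norm_pow two_ne_zero)
        (.of_forall fun w => by positivity)]
    simp only [eLpNorm_two_sq_eq_lintegral, ENNReal.ofReal_pow (norm_nonneg _), ofReal_norm]
  have hle := enorm_integral_fourierExtension_mul_le hΦ hK hH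
    (memLp_one_iff_integrable.1 (hg_mem 1)) (hg_mem 2)
  rw [← hG, hsq, hg_norm, sq] at hle
  rcases eq_or_ne (eLpNorm G 2 (volume.restrict s)) 0 with h0 | h0
  · simp [h0]
  · exact (ENNReal.mul_le_mul_iff_left h0 (hG_mem 2).eLpNorm_ne_top).1 hle

theorem eLpNorm_fourierExtension_two_le [SFinite μ] (hΦ : Measurable Φ) {K : ℝ≥0∞}
    (hK : μ.map Φ ≤ K • volume) (hH : Integrable H μ) :
    eLpNorm (fourierExtension μ Φ H) 2 ≤ K ^ (1 / 2 : ℝ) * eLpNorm H 2 μ := by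
  rw [← ENNReal.pow_le_pow_left_iff two_ne_zero, eLpNorm_two_sq_eq_lintegral]
  refine lintegral_le_of_forall_fin_meas_le _ fun s hs hs_fin => ?_
  rw [← eLpNorm_two_sq_eq_lintegral]
  gcongr
  exact eLpNorm_fourierExtension_restrict_two_le hΦ hK hH hs hs_fin

theorem exists_eLpNorm_fourierExtension_le {r q : ℝ} [SFinite μ] (hΦ : Measurable Φ)
    {K : ℝ≥0∞} (hK_top : K ≠ ⊤) (hK : μ.map Φ ≤ K • volume) (hrq : r.HolderConjugate q)
    (hr : r < 2) :
    ∃ C : ℝ≥0, ∀ H : Y → ℂ, Integrable H μ → MemLp H (.ofReal r) μ →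
      eLpNorm (fourierExtension μ Φ H) (.ofReal q) ≤ C * eLpNorm H (.ofReal r) μ := by
  refine exists_eLpNorm_le_of_one_top_of_two_two (A := 1) (B := (K ^ (1 / 2 : ℝ)).toNNReal) hrq hr
    (fun H hH => (continuous_fourierExtension hΦ hH).aestronglyMeasurable)
    (fun H G hH hG => .of_forall fun w => ?_) (fun H _ => ?_) (fun H hH => ?_)
  · rw [fourierExtension_add hΦ hH hG]
    exact norm_add_le _ _
  · rw [ENNReal.coe_one, one_mul, eLpNorm_exponent_top]
    exact eLpNormEssSup_le_of_ae_enorm_bound (.of_forall enorm_fourierExtension_le)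
  · rw [ENNReal.coe_toNNReal (by finiteness)]
    exact eLpNorm_fourierExtension_two_le hΦ hK hH

end FourierExtension

section HardyLittlewoodSobolev

variable {E : Type*} [NormedAddCommGroup E]

theorem preimage_sub_ball_zero (x : E) (R : ℝ) :
    (x - ·) ⁻¹' Metric.ball 0 R = Metric.ball x R := by
  ext y
  simp [dist_eq_norm, norm_sub_rev]

variable [NormedSpace ℝ E]

theorem preimage_smul_ball_zero {R : ℝ} (hR : 0 < R) :
    (R • ·) ⁻¹' Metric.ball (0 : E) R = Metric.ball 0 1 := by
  ext x
  simp [norm_smul, abs_of_pos hR, hR]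

variable [FiniteDimensional ℝ E] [MeasurableSpace E] [BorelSpace E]
  {μ : Measure E} [μ.IsAddHaarMeasure]

theorem setLIntegral_enorm_rpow_eq_preimage_smul {s : Set E} (hs : MeasurableSet s)
    (b : ℝ) {R : ℝ} (hR : 0 < R) :
    ∫⁻ x in s, ‖x‖ₑ ^ b ∂μ =
      ENNReal.ofReal (R ^ (finrank ℝ E + b)) * ∫⁻ x in (R • ·) ⁻¹' s, ‖x‖ₑ ^ b ∂μ := by
  have hpow : ENNReal.ofReal (R ^ (finrank ℝ E + b)) =
      ENNReal.ofReal (R ^ finrank ℝ E) * ENNReal.ofReal R ^ b := by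
    rw [ENNReal.ofReal_rpow_of_pos hR, ← ENNReal.ofReal_mul (by positivity), rpow_add hR,
      rpow_natCast]
  have hscale (x : E) : ‖R • x‖ₑ ^ b = ENNReal.ofReal R ^ b * ‖x‖ₑ ^ b := by
    rw [enorm_smul, ENNReal.mul_rpow_of_ne_top enorm_ne_top enorm_ne_top,
      enorm_of_nonneg hR.le]
  have hmap := setLIntegral_map (μ := μ) (f := fun x : E => ‖x‖ₑ ^ b) hs (by fun_prop)
    (measurable_const_smul R)
  rw [Measure.map_addHaar_smul μ hR.ne', setLIntegral_smul_measure] at hmap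
  simp only [hscale] at hmap
  rw [lintegral_const_mul _ (by fun_prop), abs_of_pos (by positivity),
    ENNReal.ofReal_inv_of_pos (by positivity), smul_eq_mul] at hmap
  rw [hpow, mul_assoc, ← hmap, ← mul_assoc, ENNReal.mul_inv_cancel
    (ENNReal.ofReal_pos.2 (by positivity)).ne' ENNReal.ofReal_ne_top, one_mul]

theorem exists_setLIntegral_ball_enorm_rpow_eq [Nontrivial E] {b : ℝ} (hb : 0 < finrank ℝ E + b) :
    ∃ c : ℝ≥0, ∀ (x : E) {R : ℝ}, 0 < R → ∫⁻ y in Metric.ball x R, ‖x - y‖ₑ ^ b ∂μ =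
      c * ENNReal.ofReal (R ^ (finrank ℝ E + b)) := by
  have hfin : ∫⁻ x in Metric.ball (0 : E) 1, ‖x‖ₑ ^ b ∂μ < ⊤ := by
    have hint : IntegrableOn (fun x : E => ‖x‖ ^ b) (Metric.ball 0 1) μ := by
      refine integrableOn_ball_of_norm_le_rpow finrank_pos (C := 1) (α := -b) (by linarith)
        (.of_forall fun x => ?_) (measurable_norm.pow_const b).aestronglyMeasurable
      rw [norm_of_nonneg (by positivity), neg_neg, one_mul]
    refine (lintegral_congr_ae ?_).trans_lt hint.hasFiniteIntegral
    filter_upwards [ae_restrict_of_ae (Measure.ae_ne μ (0 : E))] with x hx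
    rw [← ofReal_norm, ENNReal.ofReal_rpow_of_pos (norm_pos_iff.2 hx),
      enorm_of_nonneg (by positivity)]
  refine ⟨(∫⁻ x in Metric.ball (0 : E) 1, ‖x‖ₑ ^ b ∂μ).toNNReal, fun x R hR => ?_⟩
  rw [← preimage_sub_ball_zero, (μ.measurePreserving_sub_left x).setLIntegral_comp_preimage
    measurableSet_ball (f := fun z => ‖z‖ₑ ^ b) (by fun_prop),
    setLIntegral_enorm_rpow_eq_preimage_smul measurableSet_ball b hR, preimage_smul_ball_zero hR,
    ENNReal.coe_toNNReal hfin.ne, mul_comm]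

theorem exists_setLIntegral_compl_ball_enorm_rpow_eq {b : ℝ} (hb : finrank ℝ E + b < 0) :
    ∃ c : ℝ≥0, ∀ (x : E) {R : ℝ}, 0 < R → ∫⁻ y in (Metric.ball x R)ᶜ, ‖x - y‖ₑ ^ b ∂μ =
      c * ENNReal.ofReal (R ^ (finrank ℝ E + b)) := by
  have hfin : ∫⁻ x in (Metric.ball (0 : E) 1)ᶜ, ‖x‖ₑ ^ b ∂μ < ⊤ := by
    have hb0 : b ≤ 0 := by linarith [(finrank ℝ E).cast_nonneg (α := ℝ)]
    refine (setLIntegral_mono' (g := fun x => ENNReal.ofReal (2 ^ (-b)) *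
      ENNReal.ofReal ((1 + ‖x‖) ^ (- -b))) measurableSet_ball.compl fun x hx => ?_).trans_lt ?_
    · have hx1 : 1 ≤ ‖x‖ := by simpa using hx
      rw [← ofReal_norm, ENNReal.ofReal_rpow_of_pos (by linarith),
        ← ENNReal.ofReal_mul (by positivity), neg_neg]
      refine ENNReal.ofReal_le_ofReal ?_
      calc ‖x‖ ^ b ≤ ((1 + ‖x‖) / 2) ^ b :=
            rpow_le_rpow_of_nonpos (by positivity) (by linarith) hb0
        _ = 2 ^ (-b) * (1 + ‖x‖) ^ b := by
            rw [div_rpow (by positivity) (by positivity), rpow_neg two_pos.le, div_eq_inv_mul]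
    · rw [lintegral_const_mul' _ _ ENNReal.ofReal_ne_top]
      exact ENNReal.mul_lt_top ENNReal.ofReal_lt_top
        ((setLIntegral_le_lintegral _ _).trans_lt (finite_integral_one_add_norm (by linarith)))
  refine ⟨(∫⁻ x in (Metric.ball (0 : E) 1)ᶜ, ‖x‖ₑ ^ b ∂μ).toNNReal, fun x R hR => ?_⟩
  rw [← preimage_sub_ball_zero, ← preimage_compl,
    (μ.measurePreserving_sub_left x).setLIntegral_comp_preimage
    measurableSet_ball.compl (f := fun z => ‖z‖ₑ ^ b) (by fun_prop),
    setLIntegral_enorm_rpow_eq_preimage_smul measurableSet_ball.compl b hR, preimage_compl,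
    preimage_smul_ball_zero hR, ENNReal.coe_toNNReal hfin.ne, mul_comm]

variable {F : Type*} [NormedAddCommGroup F] {s s' : ℝ}

theorem exists_setLIntegral_compl_ball_enorm_mul_le (hs : s.HolderConjugate s') {b : ℝ}
    (hb : finrank ℝ E + b * s' < 0) :
    ∃ c : ℝ≥0, ∀ {f : E → F}, AEStronglyMeasurable f μ → ∀ (x : E) {R : ℝ}, 0 < R →
      ∫⁻ y in (Metric.ball x R)ᶜ, ‖f y‖ₑ * ‖x - y‖ₑ ^ b ∂μ ≤
        c * ENNReal.ofReal (R ^ ((finrank ℝ E + b * s') / s')) * eLpNorm f (.ofReal s) μ := by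
  obtain ⟨c, hc⟩ := exists_setLIntegral_compl_ball_enorm_rpow_eq (μ := μ) hb
  refine ⟨c ^ (1 / s'), fun {f} hf x R hR => ?_⟩
  have hs'0 := hs.symm.nonneg
  calc ∫⁻ y in (Metric.ball x R)ᶜ, ‖f y‖ₑ * ‖x - y‖ₑ ^ b ∂μ
      ≤ (∫⁻ y in (Metric.ball x R)ᶜ, ‖f y‖ₑ ^ s ∂μ) ^ (1 / s) *
          (∫⁻ y in (Metric.ball x R)ᶜ, (‖x - y‖ₑ ^ b) ^ s' ∂μ) ^ (1 / s') :=
        ENNReal.lintegral_mul_le_Lp_mul_Lq _ hs hf.restrict.enorm (by fun_prop)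
    _ ≤ (∫⁻ y, ‖f y‖ₑ ^ s ∂μ) ^ (1 / s) *
          (c * ENNReal.ofReal (R ^ (finrank ℝ E + b * s'))) ^ (1 / s') := by
        simp only [← ENNReal.rpow_mul, hc x hR]
        gcongr
        · exact hs.one_div_nonneg
        · exact Measure.restrict_le_self
    _ = ↑(c ^ (1 / s')) * ENNReal.ofReal (R ^ ((finrank ℝ E + b * s') / s')) *
          eLpNorm f (.ofReal s) μ := by
        rw [← eLpNorm_ofReal_rpow_eq_lintegral hs.pos, one_div, ENNReal.rpow_rpow_inv hs.ne_zero,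
          ENNReal.mul_rpow_of_nonneg _ _ (by positivity),
          ENNReal.ofReal_rpow_of_nonneg (by positivity) (by positivity), ← rpow_mul hR.le,
          ENNReal.coe_rpow_of_nonneg _ (by positivity), mul_one_div, mul_comm]

theorem exists_lintegral_indicator_enorm_mul_le_add [Nontrivial E] (hs : s.HolderConjugate s')
    {b : ℝ} (hb : 0 < finrank ℝ E + b) (hb' : finrank ℝ E + b * s' < 0) :
    ∃ c₁ c₂ : ℝ≥0, ∀ {f : E → F}, AEStronglyMeasurable f μ → ∀ {A : ℝ}, 0 ≤ A →
      ∀ (x : E) {R : ℝ}, 0 < R →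
        ∫⁻ y, {y | ‖f y‖ ≤ A}.indicator (fun y => ‖f y‖ₑ * ‖x - y‖ₑ ^ b) y ∂μ ≤
          c₁ * ENNReal.ofReal (A * R ^ (finrank ℝ E + b)) +
            c₂ * ENNReal.ofReal (R ^ ((finrank ℝ E + b * s') / s')) *
              eLpNorm f (.ofReal s) μ := by
  obtain ⟨c₁, hc₁⟩ := exists_setLIntegral_ball_enorm_rpow_eq (μ := μ) hb
  obtain ⟨c₂, hc₂⟩ := exists_setLIntegral_compl_ball_enorm_mul_le (F := F) (μ := μ) hs hb'
  refine ⟨c₁, c₂, fun {f} hf {A} hA x R hR => ?_⟩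
  rw [← lintegral_add_compl _ (Metric.isOpen_ball (x := x) (ε := R)).measurableSet]
  refine add_le_add ?_ ((lintegral_mono (Set.indicator_le_self _ _)).trans (hc₂ hf x hR))
  calc ∫⁻ y in Metric.ball x R, {y | ‖f y‖ ≤ A}.indicator (fun y => ‖f y‖ₑ * ‖x - y‖ₑ ^ b) y ∂μ
      ≤ ∫⁻ y in Metric.ball x R, ENNReal.ofReal A * ‖x - y‖ₑ ^ b ∂μ := by
        refine lintegral_mono fun y => Set.indicator_apply_le' (fun hy => ?_) fun _ => zero_le
        gcongr
        rw [← ofReal_norm]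
        exact ENNReal.ofReal_le_ofReal hy
    _ = c₁ * ENNReal.ofReal (A * R ^ (finrank ℝ E + b)) := by
        rw [lintegral_const_mul' _ _ ENNReal.ofReal_ne_top, hc₁ x hR, mul_left_comm,
          ← ENNReal.ofReal_mul hA]

/-- Optimizing the radius in `exists_lintegral_indicator_enorm_mul_le_add`: for this exponent both
terms balance at `R ^ finrank ℝ E = (‖f‖_s / A) ^ s`. -/
theorem exists_lintegral_indicator_enorm_mul_le [Nontrivial E] (hs : s.HolderConjugate s')
    (hs2 : s < 2) :
    ∃ C : ℝ≥0, ∀ {f : E → F}, AEStronglyMeasurable f μ → ∀ {L : ℝ}, 0 < L →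
      eLpNorm f (.ofReal s) μ = .ofReal L → ∀ {A : ℝ}, 0 < A → ∀ x,
      ∫⁻ y, {y | ‖f y‖ ≤ A}.indicator
        (fun y => ‖f y‖ₑ * ‖x - y‖ₑ ^ (-(2 * finrank ℝ E / s'))) y ∂μ ≤
          C * ENNReal.ofReal (A * (L / A) ^ (2 - s)) := by
  have hs's : s / s' = s - 1 := hs.div_conj_eq_sub_one
  have hs'2 : 2 / s' < 1 :=
    (div_lt_one hs.symm.pos).2 (by nlinarith [hs.lt, hs.symm.lt, hs.mul_eq_add])
  obtain ⟨d, hd_def⟩ : ∃ d : ℝ, d = finrank ℝ E := ⟨_, rfl⟩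
  have hd : 0 < d := hd_def ▸ mod_cast finrank_pos
  have hnear : d + -(2 * d / s') = d * (1 - 2 / s') := by ring
  have hfar : d + -(2 * d / s') * s' = -d := by
    rw [neg_mul, div_mul_cancel₀ _ hs.symm.ne_zero]
    ring
  obtain ⟨c₁, c₂, hc⟩ := exists_lintegral_indicator_enorm_mul_le_add (F := F) (μ := μ) hs
    (b := -(2 * d / s'))
    (by rw [← hd_def, hnear]; exact mul_pos hd (sub_pos.2 hs'2))
    (by rw [← hd_def, hfar]; exact neg_neg_iff_pos.2 hd)
  rw [← hd_def] at hc ⊢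
  refine ⟨c₁ + c₂, fun {f} hf {L} hL hfL {A} hA x => ?_⟩
  have hLA : 0 < L / A := by positivity
  refine (hc hf hA.le x (rpow_pos_of_pos hLA (s / d))).trans_eq ?_
  have hnear_pow : ((L / A) ^ (s / d)) ^ (d * (1 - 2 / s')) = (L / A) ^ (2 - s) := by
    rw [← rpow_mul hLA.le, ← mul_assoc, div_mul_cancel₀ s hd.ne', mul_sub, mul_one,
      mul_div_left_comm, hs's]
    congr 1
    ring
  have hfar_pow : ((L / A) ^ (s / d)) ^ (-d / s') * L = A * (L / A) ^ (2 - s) := by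
    rw [← rpow_mul hLA.le, show s / d * (-d / s') = -(s / s') by field_simp, hs's,
      show 2 - s = -(s - 1) + 1 by ring, rpow_add_one hLA.ne']
    field_simp
  rw [hnear, hfar, hfL, mul_assoc, ← ENNReal.ofReal_mul (by positivity), hnear_pow, hfar_pow,
    ENNReal.coe_add, add_mul]

theorem exists_lintegral_indicator_norm_le_norm_mul_le [Nontrivial E] (hs : s.HolderConjugate s')
    (hs2 : s < 2) :
    ∃ C : ℝ≥0, ∀ {f : E → F}, AEStronglyMeasurable f μ → ∀ {L : ℝ}, 0 < L →
      eLpNorm f (.ofReal s) μ = .ofReal L → ∀ x,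
      ∫⁻ y, {y | ‖f y‖ ≤ ‖f x‖}.indicator
        (fun y => ‖f x‖ₑ * ‖f y‖ₑ * ‖x - y‖ₑ ^ (-(2 * finrank ℝ E / s'))) y ∂μ ≤
          C * ENNReal.ofReal (L ^ (2 - s)) * ‖f x‖ₑ ^ s := by
  obtain ⟨C, hC⟩ := exists_lintegral_indicator_enorm_mul_le (F := F) (μ := μ) hs hs2
  refine ⟨C, fun {f} hf {L} hL hfL x => ?_⟩
  rcases (norm_nonneg (f x)).eq_or_lt with hx | hx
  · simp [norm_eq_zero.1 hx.symm]
  simp only [mul_assoc, Set.indicator_const_mul]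
  rw [lintegral_const_mul' _ _ enorm_ne_top]
  calc ‖f x‖ₑ * ∫⁻ y, {y | ‖f y‖ ≤ ‖f x‖}.indicator
        (fun y => ‖f y‖ₑ * ‖x - y‖ₑ ^ (-(2 * finrank ℝ E / s'))) y ∂μ
      ≤ ‖f x‖ₑ * (C * ENNReal.ofReal (‖f x‖ * (L / ‖f x‖) ^ (2 - s))) := by
        gcongr
        exact hC hf hL hfL hx x
    _ = C * (ENNReal.ofReal (L ^ (2 - s)) * ‖f x‖ₑ ^ s) := by
        rw [← ofReal_norm, ENNReal.ofReal_rpow_of_pos hx, mul_left_comm,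
          ← ENNReal.ofReal_mul hx.le, ← ENNReal.ofReal_mul (by positivity),
          div_rpow hL.le hx.le, rpow_sub hx, rpow_two]
        congr 2
        field_simp

theorem lintegral_prod_le_two_mul_lintegral_indicator {X : Type*} [MeasurableSpace X]
    {μ : Measure X} [SFinite μ] {h : X → ℝ} (hh : AEMeasurable h μ) {g : X × X → ℝ≥0∞}
    (hg : AEMeasurable g (μ.prod μ)) (hg_swap : ∀ z, g z.swap = g z) :
    ∫⁻ z, g z ∂(μ.prod μ) ≤ 2 * ∫⁻ z, {z | h z.2 ≤ h z.1}.indicator g z ∂(μ.prod μ) := by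
  have hind : AEMeasurable ({z : X × X | h z.2 ≤ h z.1}.indicator g) (μ.prod μ) :=
    hg.indicator₀ (nullMeasurableSet_le hh.comp_snd hh.comp_fst)
  rw [two_mul]
  nth_rw 3 [← lintegral_prod_swap]
  rw [← lintegral_add_left' hind]
  refine lintegral_mono fun z => ?_
  rcases le_total (h z.2) (h z.1) with hz | hz <;> simp [Set.indicator_apply, hz, hg_swap]

theorem exists_lintegral_prod_enorm_mul_enorm_sub_rpow_le [Nontrivial E]
    (hs : s.HolderConjugate s') (hs2 : s < 2) :
    ∃ C : ℝ≥0, ∀ {f : E → F}, MemLp f (.ofReal s) μ →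
      ∫⁻ z, ‖f z.1‖ₑ * ‖f z.2‖ₑ * ‖z.1 - z.2‖ₑ ^ (-(2 * finrank ℝ E / s')) ∂(μ.prod μ) ≤
        C * eLpNorm f (.ofReal s) μ ^ 2 := by
  obtain ⟨C, hC⟩ := exists_lintegral_indicator_norm_le_norm_mul_le (F := F) (μ := μ) hs hs2
  refine ⟨2 * C, fun {f} hf => ?_⟩
  rcases eq_or_ne (eLpNorm f (.ofReal s) μ) 0 with h0 | h0
  · have hf0 : f =ᵐ[μ] 0 :=
      (eLpNorm_eq_zero_iff hf.aestronglyMeasurable (ENNReal.ofReal_pos.2 hs.pos).ne').1 h0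
    refine (lintegral_congr_ae ?_).trans_le (lintegral_zero.trans_le zero_le)
    filter_upwards [Measure.quasiMeasurePreserving_fst.ae hf0] with z hz
    simp [hz]
  obtain ⟨L, hL⟩ : ∃ L : ℝ, eLpNorm f (.ofReal s) μ = .ofReal L :=
    ⟨_, (ENNReal.ofReal_toReal hf.eLpNorm_ne_top).symm⟩
  have hL0 : 0 < L := ENNReal.ofReal_pos.1 (hL ▸ pos_iff_ne_zero.2 h0)
  set b := -(2 * finrank ℝ E / s')
  have hfm := hf.aestronglyMeasurable
  let g : E × E → ℝ≥0∞ := fun z => ‖f z.1‖ₑ * ‖f z.2‖ₑ * ‖z.1 - z.2‖ₑ ^ b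
  have hg : AEMeasurable g (μ.prod μ) :=
    (hfm.enorm.comp_fst.mul hfm.enorm.comp_snd).mul (by fun_prop)
  calc ∫⁻ z, g z ∂(μ.prod μ)
      ≤ 2 * ∫⁻ z, {z | ‖f z.2‖ ≤ ‖f z.1‖}.indicator g z ∂(μ.prod μ) :=
        lintegral_prod_le_two_mul_lintegral_indicator hfm.norm.aemeasurable hg fun z => by
          simp only [g, Prod.fst_swap, Prod.snd_swap, enorm_sub_rev z.2, mul_comm ‖f z.2‖ₑ]
    _ ≤ 2 * ∫⁻ x, C * ENNReal.ofReal (L ^ (2 - s)) * ‖f x‖ₑ ^ s ∂μ := by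
        gcongr
        exact (lintegral_prod_le _).trans (lintegral_mono (hC hfm hL0 hL))
    _ = ↑(2 * C) * eLpNorm f (.ofReal s) μ ^ 2 := by
        rw [lintegral_const_mul' _ _ (by finiteness), ← eLpNorm_ofReal_rpow_eq_lintegral hs.pos, hL,
          ENNReal.ofReal_rpow_of_pos hL0, mul_assoc, ← ENNReal.ofReal_mul (by positivity),
          ← rpow_add hL0, ← ENNReal.ofReal_pow hL0.le]
        simp [mul_assoc]

end HardyLittlewoodSobolev

section Parabola

theorem lintegral_enorm_mul_comp_quadratic_le {a : ℝ} (ha : a ≠ 0) (e : ℝ) (G : ℝ → ℝ≥0∞) :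
    ∫⁻ x, ‖2 * a * x‖ₑ * G (a * x ^ 2 + e) ≤ 2 * ∫⁻ y, G y := by
  have hinj_le {s : Set ℝ} (hs : MeasurableSet s) (hinj : InjOn (fun x => a * x ^ 2 + e) s) :
      ∫⁻ x in s, ‖2 * a * x‖ₑ * G (a * x ^ 2 + e) ≤ ∫⁻ y, G y := by
    simp only [Real.enorm_eq_ofReal_abs]
    rw [← lintegral_image_eq_lintegral_abs_deriv_mul hs (fun x _ => ?_) hinj]
    · exact setLIntegral_le_lintegral _ _
    · convert! ((((hasDerivAt_pow 2 x).const_mul a).add_const e).hasDerivWithinAt) using 1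
      push_cast
      ring
  have hsq {x y : ℝ} (h : a * x ^ 2 + e = a * y ^ 2 + e) : x = y ∨ x = -y :=
    sq_eq_sq_iff_eq_or_eq_neg.1 (mul_left_cancel₀ ha (add_right_cancel h))
  rw [← lintegral_add_compl _ (measurableSet_Ioi (a := (0 : ℝ))), compl_Ioi,
    two_mul (∫⁻ y, G y)]
  refine add_le_add (hinj_le measurableSet_Ioi fun x hx y hy h => ?_)
    (hinj_le measurableSet_Iic fun x hx y hy h => ?_)
  · rcases hsq h with h | h <;> linarith [mem_Ioi.1 hx, mem_Ioi.1 hy]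
  · rcases hsq h with h | h <;> linarith [mem_Iic.1 hx, mem_Iic.1 hy]

theorem lintegral_enorm_sub_mul_comp_sq_add_sq_le {a : ℝ} (ha : 0 < a) {k : ℝ → ℝ → ℝ≥0∞}
    (hk : Measurable (Function.uncurry k)) :
    ∫⁻ z : ℝ × ℝ, ‖z.1 - z.2‖ₑ * k (a * (z.1 ^ 2 + z.2 ^ 2)) (-(z.1 + z.2)) ≤
      ENNReal.ofReal a⁻¹ * ∫⁻ u, ∫⁻ v, k v u := by
  calc ∫⁻ z : ℝ × ℝ, ‖z.1 - z.2‖ₑ * k (a * (z.1 ^ 2 + z.2 ^ 2)) (-(z.1 + z.2))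
      = ∫⁻ ξ : ℝ, (∫⁻ η, ‖ξ - η‖ₑ * k (a * (ξ ^ 2 + η ^ 2)) (-(ξ + η))) :=
        lintegral_prod _ (by fun_prop)
    _ = ∫⁻ ξ : ℝ, (∫⁻ u : ℝ, ‖2 * ξ + u‖ₑ * k (a * (ξ ^ 2 + (ξ + u) ^ 2)) u) := by
        refine lintegral_congr fun ξ => ?_
        rw [← lintegral_sub_left_eq_self _ (-ξ)]
        refine lintegral_congr fun u => ?_
        congr 2 <;> ring_nf
    _ = ∫⁻ u : ℝ, (∫⁻ ξ : ℝ, ‖2 * ξ + u‖ₑ * k (a * (ξ ^ 2 + (ξ + u) ^ 2)) u) :=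
        lintegral_lintegral_swap (by unfold Function.uncurry; fun_prop)
    _ = ∫⁻ u : ℝ, (∫⁻ ξ : ℝ, ENNReal.ofReal (2 * a)⁻¹ *
          (‖2 * (2 * a) * ξ‖ₑ * k (2 * a * ξ ^ 2 + a / 2 * u ^ 2) u)) := by
        refine lintegral_congr fun u => ?_
        rw [← lintegral_sub_right_eq_self _ (u / 2)]
        refine lintegral_congr fun ξ => ?_
        rw [Real.enorm_eq_ofReal_abs, Real.enorm_eq_ofReal_abs, ← mul_assoc,
          ← ENNReal.ofReal_mul (by positivity), ← abs_of_pos (a := (2 * a)⁻¹) (by positivity),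
          ← abs_mul]
        congr 3
        · field_simp
          ring
        · ring
    _ ≤ ∫⁻ u : ℝ, ENNReal.ofReal (2 * a)⁻¹ * (2 * ∫⁻ v, k v u) := by
        simp only [lintegral_const_mul' _ _ ENNReal.ofReal_ne_top]
        gcongr with u
        exact lintegral_enorm_mul_comp_quadratic_le (by positivity) _ fun v => k v u
    _ = ENNReal.ofReal a⁻¹ * ∫⁻ u, ∫⁻ v, k v u := by
        have hconst : ENNReal.ofReal (2 * a)⁻¹ * 2 = ENNReal.ofReal a⁻¹ := by
          rw [← ENNReal.ofReal_ofNat 2, ← ENNReal.ofReal_mul (by positivity)]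
          congr 1
          field_simp
        rw [lintegral_const_mul' _ _ ENNReal.ofReal_ne_top,
          lintegral_const_mul' _ _ ENNReal.ofNat_ne_top, ← mul_assoc, hconst]

theorem ae_prod_fst_ne_snd {X : Type*} [MeasurableSpace X] [MeasurableEq X]
    {μ ν : Measure X} [SFinite ν] [NullSingletonClass ν] : ∀ᵐ z ∂(μ.prod ν), z.1 ≠ z.2 :=
  (Measure.ae_prod_iff_ae_ae (measurableSet_eq_fun measurable_fst measurable_snd).compl).2
    (.of_forall fun x => (Measure.ae_ne ν x).mono fun _ => Ne.symm)

/-- The dual parabola `ξ ↦ (2πξ², -ξ)` of the free Schrödinger equation: the phase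
`-2π⟪(t, x), parabola ξ⟫` equals `-4π²tξ² + 2πxξ`. -/
noncomputable def parabola (ξ : ℝ) : WithLp 2 (ℝ × ℝ) :=
  WithLp.toLp 2 (2 * π * ξ ^ 2, -ξ)

@[fun_prop]
theorem measurable_parabola : Measurable parabola :=
  (WithLp.measurable_toLp 2 _).comp (by fun_prop)

theorem lintegral_enorm_sub_mul_comp_parabola_add_le {g : WithLp 2 (ℝ × ℝ) → ℝ≥0∞}
    (hg : Measurable g) :
    ∫⁻ z : ℝ × ℝ, ‖z.1 - z.2‖ₑ * g (parabola z.1 + parabola z.2) ≤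
      ENNReal.ofReal (2 * π)⁻¹ * ∫⁻ w, g w := by
  have hgL : Measurable fun z => g (WithLp.toLp 2 z) := hg.comp (WithLp.measurable_toLp 2 _)
  rw [← (WithLp.volume_preserving_toLp ℝ ℝ).lintegral_comp hg, Measure.volume_eq_prod,
    lintegral_prod_symm _ hgL.aemeasurable]
  refine (lintegral_congr fun z => ?_).trans_le (lintegral_enorm_sub_mul_comp_sq_add_sq_le
    two_pi_pos (k := fun v u => g (WithLp.toLp 2 (v, u))) hgL)
  rw [parabola, parabola, ← WithLp.toLp_add, Prod.mk_add_mk]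
  ring_nf

/-- The measure `|ξ - η| dξ dη`, whose weight is, up to a constant, the Jacobian of
`(ξ, η) ↦ parabola ξ + parabola η`. -/
noncomputable def pairMeasure : Measure (ℝ × ℝ) :=
  (volume.prod volume).withDensity fun z => ‖z.1 - z.2‖₊

instance : SFinite pairMeasure := by
  unfold pairMeasure
  infer_instance

theorem map_pairMeasure_parabola_add_le :
    pairMeasure.map (fun z => parabola z.1 + parabola z.2) ≤
      ENNReal.ofReal (2 * π)⁻¹ • volume := by
  refine Measure.le_iff.2 fun s hs => ?_
  have hone : Measurable (s.indicator (1 : WithLp 2 (ℝ × ℝ) → ℝ≥0∞)) := measurable_one.indicator hs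
  rw [← lintegral_indicator_one hs, lintegral_map hone (by fun_prop), pairMeasure,
    lintegral_withDensity_eq_lintegral_mul _ (by fun_prop) (by fun_prop),
    Measure.smul_apply, smul_eq_mul, ← lintegral_indicator_one hs]
  exact lintegral_enorm_sub_mul_comp_parabola_add_le hone

/-- The amplitude of `f ⊗ f` with respect to `pairMeasure`; it is the junk value `0` on the
diagonal. -/
noncomputable def pairAmplitude (f : ℝ → ℂ) (z : ℝ × ℝ) : ℂ :=
  ‖z.1 - z.2‖⁻¹ • (f z.1 * f z.2)

theorem nnnorm_smul_pairAmplitude_ae_eq (f : ℝ → ℂ) :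
    (fun z => ‖z.1 - z.2‖₊ • pairAmplitude f z) =ᵐ[volume.prod volume] fun z => f z.1 * f z.2 := by
  filter_upwards [ae_prod_fst_ne_snd] with z hz
  exact smul_inv_smul₀ (norm_ne_zero_iff.2 (sub_ne_zero.2 hz)) _

theorem integrable_pairAmplitude {f : ℝ → ℂ} (hf : Integrable f) :
    Integrable (pairAmplitude f) pairMeasure := by
  rw [pairMeasure, integrable_withDensity_iff_integrable_smul (by fun_prop)]
  exact (hf.mul_prod hf).congr (nnnorm_smul_pairAmplitude_ae_eq f).symm

theorem fourierExtension_parabola_sq (f : ℝ → ℂ) (w : WithLp 2 (ℝ × ℝ)) :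
    fourierExtension volume parabola f w ^ 2 =
      fourierExtension pairMeasure (fun z => parabola z.1 + parabola z.2) (pairAmplitude f) w := by
  rw [sq, fourierExtension_mul_fourierExtension, pairMeasure,
    fourierExtension_withDensity (by fun_prop),
    fourierExtension_congr_ae (nnnorm_smul_pairAmplitude_ae_eq f)]

theorem eLpNorm_fourierExtension_parabola_sq (f : ℝ → ℂ) {q : ℝ} (hq : 0 ≤ q) :
    eLpNorm (fourierExtension volume parabola f) (.ofReal (q * 2)) ^ 2 =
      eLpNorm (fourierExtension pairMeasure (fun z => parabola z.1 + parabola z.2)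
        (pairAmplitude f)) (.ofReal q) := by
  rw [ENNReal.ofReal_mul hq, ← ENNReal.rpow_two, ← eLpNorm_norm_rpow _ two_pos]
  refine eLpNorm_congr_norm_ae (.of_forall fun w => ?_)
  rw [← fourierExtension_parabola_sq, rpow_two, norm_pow, norm_pow, norm_norm]

theorem lintegral_enorm_pairAmplitude_rpow {f : ℝ → ℂ} (hf : AEStronglyMeasurable f) {r : ℝ}
    (hr : 0 ≤ r) :
    ∫⁻ z, ‖pairAmplitude f z‖ₑ ^ r ∂pairMeasure =
      ∫⁻ z, ‖f z.1‖ₑ ^ r * ‖f z.2‖ₑ ^ r * ‖z.1 - z.2‖ₑ ^ (1 - r) ∂(volume.prod volume) := by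
  have hamp : AEStronglyMeasurable (pairAmplitude f) (volume.prod volume) :=
    (by fun_prop : Measurable fun z : ℝ × ℝ => ‖z.1 - z.2‖⁻¹).aestronglyMeasurable.smul
      (hf.comp_fst.mul hf.comp_snd)
  rw [pairMeasure, lintegral_withDensity_eq_lintegral_mul₀ (by fun_prop) (by fun_prop)]
  refine lintegral_congr_ae ?_
  filter_upwards [ae_prod_fst_ne_snd] with z hz
  have hd : ‖z.1 - z.2‖ₑ ≠ 0 := enorm_ne_zero.2 (sub_ne_zero.2 hz)
  rw [Pi.mul_apply, pairAmplitude, enorm_smul, enorm_mul,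
    enorm_inv (norm_ne_zero_iff.2 (sub_ne_zero.2 hz)), enorm_norm,
    ENNReal.mul_rpow_of_nonneg _ _ hr, ENNReal.mul_rpow_of_nonneg _ _ hr,
    ENNReal.rpow_sub _ _ hd enorm_ne_top, ENNReal.rpow_one, ENNReal.inv_rpow,
    ← enorm_eq_nnnorm, div_eq_mul_inv]
  ring

theorem exists_eLpNorm_pairAmplitude_le {r s s' : ℝ} (hs : s.HolderConjugate s') (hs2 : s < 2)
    (hr : r = 1 + 2 / s') :
    ∃ C : ℝ≥0, ∀ f : ℝ → ℂ, MemLp f (.ofReal (r * s)) →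
      eLpNorm (pairAmplitude f) (.ofReal r) pairMeasure ≤ C * eLpNorm f (.ofReal (r * s)) ^ 2 := by
  have hr0 : 0 < r := by linarith [div_pos two_pos hs.symm.pos]
  obtain ⟨C, hC⟩ :=
    exists_lintegral_prod_enorm_mul_enorm_sub_rpow_le (F := ℝ) (μ := (volume : Measure ℝ)) hs hs2
  refine ⟨C ^ r⁻¹, fun f hf => ?_⟩
  have hmul : ENNReal.ofReal (r * s) = ENNReal.ofReal s * ENNReal.ofReal r := by
    rw [mul_comm, ENNReal.ofReal_mul hs.nonneg]
  have hnorm := eLpNorm_norm_rpow (p := .ofReal s) (μ := volume) f hr0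
  have hmem : MemLp (fun x => ‖f x‖ ^ r) (.ofReal s) :=
    ⟨(hf.aestronglyMeasurable.norm.aemeasurable.pow_const r).aestronglyMeasurable, by
      rw [hnorm, ← hmul]
      exact ENNReal.rpow_lt_top_of_nonneg hr0.le hf.eLpNorm_ne_top⟩
  have henorm (x : ℝ) : ‖‖f x‖ ^ r‖ₑ = ‖f x‖ₑ ^ r := by
    rw [enorm_of_nonneg (by positivity), ← ENNReal.ofReal_rpow_of_nonneg (norm_nonneg _) hr0.le,
      ofReal_norm]
  have hHLS := hC hmem
  rw [hnorm, ← hmul] at hHLS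
  simp only [henorm, finrank_self, Nat.cast_one, mul_one] at hHLS
  rw [← ENNReal.rpow_le_rpow_iff hr0, eLpNorm_ofReal_rpow_eq_lintegral hr0,
    lintegral_enorm_pairAmplitude_rpow hf.aestronglyMeasurable hr0.le,
    show 1 - r = -(2 / s') by rw [hr]; ring, ENNReal.mul_rpow_of_nonneg _ _ hr0.le,
    ENNReal.coe_rpow_of_nonneg _ (inv_nonneg.2 hr0.le), ENNReal.rpow_inv_rpow hr0.ne']
  refine hHLS.trans_eq ?_
  simp only [← ENNReal.rpow_natCast, ← ENNReal.rpow_mul, mul_comm r]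

theorem exists_eLpNorm_fourierExtension_parabola_le {p p' : ℝ} (hp : 4 / 3 < p)
    (hpp' : p.HolderConjugate p') :
    ∃ C : ℝ≥0, ∀ f : ℝ → ℂ, Integrable f → MemLp f (.ofReal p') →
      eLpNorm (fourierExtension volume parabola f) (.ofReal (3 * p)) ≤
        C * eLpNorm f (.ofReal p') := by
  obtain ⟨r, hr⟩ : ∃ r : ℝ, r = 1 + 2 / (3 * p - 2) := ⟨_, rfl⟩
  have hp2 : 0 < 3 * p - 2 := by linarith
  have hr2 : r < 2 := by linarith [(div_lt_one hp2).2 (by linarith : 2 < 3 * p - 2)]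
  have hrq : r.HolderConjugate (3 * p / 2) := by
    refine ((Real.holderConjugate_iff_eq_conjExponent (by linarith)).2 ?_).symm
    rw [hr]
    field_simp
    ring
  have hsr : p' / r = (3 * p - 2) / (3 * p - 2 - 1) := by
    have hp1 := hpp'.sub_one_pos
    rw [hr, hpp'.conjugate_eq, show 3 * p - 2 - 1 = 3 * (p - 1) by ring, one_add_div hp2.ne',
      sub_add_cancel]
    field_simp
  have hs : (p' / r).HolderConjugate (3 * p - 2) :=
    ((Real.holderConjugate_iff_eq_conjExponent (by linarith)).2 hsr).symm
  have hs2 : p' / r < 2 := by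
    rw [hsr, div_lt_iff₀ (by linarith)]
    linarith
  have hp' : r * (p' / r) = p' := mul_div_cancel₀ p' hrq.ne_zero
  obtain ⟨C₁, hC₁⟩ := exists_eLpNorm_fourierExtension_le (by fun_prop) ENNReal.ofReal_ne_top
    map_pairMeasure_parabola_add_le hrq hr2
  obtain ⟨C₂, hC₂⟩ := exists_eLpNorm_pairAmplitude_le hs hs2 hr
  rw [hp'] at hC₂
  refine ⟨NNReal.sqrt (C₁ * C₂), fun f hf hfp => ?_⟩
  have hamp : MemLp (pairAmplitude f) (.ofReal r) pairMeasure :=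
    ⟨(integrable_pairAmplitude hf).aestronglyMeasurable, (hC₂ f hfp).trans_lt
      (ENNReal.mul_lt_top ENNReal.coe_lt_top (ENNReal.pow_lt_top hfp.2))⟩
  rw [← div_mul_cancel₀ (3 * p) two_ne_zero, ← ENNReal.pow_le_pow_left_iff two_ne_zero, mul_pow,
    eLpNorm_fourierExtension_parabola_sq f hrq.symm.nonneg]
  refine (hC₁ _ (integrable_pairAmplitude hf) hamp).trans ?_
  rw [← ENNReal.coe_pow, NNReal.sq_sqrt, ENNReal.coe_mul, mul_assoc]
  gcongr
  exact hC₂ f hfp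

theorem fourierExtension_parabola_toLp (f : ℝ → ℂ) (z : ℝ × ℝ) :
    fourierExtension volume parabola f (WithLp.toLp 2 z) =
      ∫ ξ : ℝ, Complex.exp (-(4 * (π : ℂ) ^ 2 * (z.1 : ℂ) * (ξ : ℂ) ^ 2) * Complex.I) * f ξ *
        Complex.exp (2 * (π : ℂ) * Complex.I * (z.2 : ℂ) * (ξ : ℂ)) := by
  refine integral_congr_ae (.of_forall fun ξ => ?_)
  beta_reduce
  rw [mul_right_comm _ (f ξ), ← Complex.exp_add, Circle.smul_def, fourierChar_apply, smul_eq_mul,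
    parabola, WithLp.prod_inner_apply]
  congr 2
  simp only [Real.inner_apply]
  push_cast
  ring

theorem eLpNorm_fourierExtension_parabola_toLp {f : ℝ → ℂ} (hf : Integrable f) (q : ℝ≥0∞) :
    eLpNorm (fun z : ℝ × ℝ => fourierExtension volume parabola f (WithLp.toLp 2 z)) q =
      eLpNorm (fourierExtension volume parabola f) q :=
  eLpNorm_comp_measurePreserving
    (continuous_fourierExtension measurable_parabola hf).aestronglyMeasurable
    (WithLp.volume_preserving_toLp ℝ ℝ)

end Parabola

theorem generalized_strichartz_1d_general (p p' : ℝ) (hp : 4 / 3 < p)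
    (hpp' : 1 / p + 1 / p' = 1) :
    ∃ C : ℝ, 0 < C ∧ ∀ f : ℝ → ℂ, Integrable f →
      eLpNorm (fun z : ℝ × ℝ => ∫ ξ : ℝ,
          Complex.exp (-(4 * (π : ℂ) ^ 2 * (z.1 : ℂ) * (ξ : ℂ) ^ 2) * Complex.I) * f ξ *
            Complex.exp (2 * (π : ℂ) * Complex.I * (z.2 : ℂ) * (ξ : ℂ)))
          (ENNReal.ofReal (3 * p)) (volume : Measure (ℝ × ℝ)) ≤
        ENNReal.ofReal C * eLpNorm f (ENNReal.ofReal p') (volume : Measure ℝ) := by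
  have hconj : p.HolderConjugate p' :=
    Real.holderConjugate_iff.2 ⟨by linarith, by simpa only [one_div] using hpp'⟩
  obtain ⟨C, hC⟩ := exists_eLpNorm_fourierExtension_parabola_le hp hconj
  refine ⟨C + 1, by positivity, fun f hf => ?_⟩
  simp only [← fourierExtension_parabola_toLp]
  rw [eLpNorm_fourierExtension_parabola_toLp hf]
  by_cases hfp : MemLp f (.ofReal p')
  · refine (hC f hf hfp).trans (mul_le_mul_left ?_ _)
    rw [← ENNReal.ofReal_coe_nnreal]
    exact ENNReal.ofReal_le_ofReal (by linarith)
  · have htop : eLpNorm f (.ofReal p') = ⊤ := by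
      by_contra h
      exact hfp ⟨hf.aestronglyMeasurable, Ne.lt_top h⟩
    rw [htop, ENNReal.mul_top (ENNReal.ofReal_pos.2 (by positivity)).ne']
    exact le_top

/-- Generalized Strichartz (Fefferman–Stein) estimate in 1D: for `4/3 < p ≤ 2`
with conjugate exponent `p'`, the space-time `L^{3p}(ℝ×ℝ)` norm of `U(t)φ` is bounded
by `C ‖𝓕φ‖_{L^{p'}}` for every Schwartz `φ`. -/
theorem generalized_strichartz_1d (p p' : ℝ) (hp1 : 4 / 3 < p) (hp2 : p ≤ 2)
    (hpp' : 1 / p + 1 / p' = 1) :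
    ∃ C : ℝ, 0 < C ∧ ∀ φ : SchwartzMap ℝ ℂ,
      eLpNorm (fun z : ℝ × ℝ => schrod1 z.1 (⇑φ) z.2)
          (ENNReal.ofReal (3 * p)) (volume : Measure (ℝ × ℝ)) ≤
        ENNReal.ofReal C * eLpNorm (𝓕 (⇑φ)) (ENNReal.ofReal p') (volume : Measure ℝ) := by
  obtain ⟨C, hC, hle⟩ := generalized_strichartz_1d_general p p' hp1 hpp'
  exact ⟨C, hC, fun φ => hle _ (SchwartzMap.fourier_coe φ ▸ (𝓕 φ).integrable)⟩
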